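/- arXiv:1510.04144 — 2 statements merged into one kernel-verified Lean document; each statement's English description precedes it below -/
import Mathlib

section
/- Let r ≥ 2, let Γ be the free group of rank r with its standard free generating set X, and let Δ₀ be a finitely generated subgroup of Γ. Then there exist constants C > 0 and D > 0 such that for every γ ∈ Γ with γ ∉ Δ₀ there exist a finite group Q and a homomorphism φ : Γ → Q with φ(γ) ∉ φ(Δ₀) and |Q| ≤ C·‖γ‖_X^D; moreover, the subgroup Λ = Δ₀ ⊔ ker(φ) (the join of Δ₀ and the kernel of φ) satisfies: Δ₀ ≤ Λ, γ ∉ Λ, the index [Γ : Λ] ≤ |Q|, and the index of the normal core of Λ in Γ is at most |Q|. -/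
/-- The word norm of `γ` with respect to a generating set `X`: the least `m` such that
`γ` is a product of `m` elements of `X ∪ X⁻¹`. -/
noncomputable def wordNorm {Γ : Type*} [Group Γ] (X : Set Γ) (γ : Γ) : ℕ :=
  sInf {m | ∃ l : List Γ, l.length = m ∧ (∀ x ∈ l, x ∈ X ∪ X⁻¹) ∧ l.prod = γ}

/-!
Two inputs are combined. First, the free group embeds into `SL(2, ℤ)` by ping-pong. The matrix
entries of a word of length `n` are at most exponential in `n`, so a nonzero entry of `ρ γ - 1`
is not divisible by some `m` of size linear in `n`, because `lcm (1, …, 2k) ≥ 2 ^ k`. Reducing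
modulo `m` detects `γ ≠ 1` in a quotient of order polynomial in `n`.

Second, by Marshall Hall's theorem `Δ₀` is a retract of a finite-index subgroup `H`, say by
`τ : H → Δ₀`. Schreier rewriting shows that `τ` is Lipschitz for the word norm. An element `γ ∈ H`
lies outside `Δ₀` exactly when `(τ γ)⁻¹ * γ ≠ 1`, so if `M` is a normal subgroup of finite index
missing this element, then `γ` is separated from `Δ₀` by `M` intersected with the normal core of
`τ⁻¹ M`. The index of that core is polynomial in the index of `M`, since `τ⁻¹ M` has at most
`[Γ : H]` conjugates. An element outside `H` is separated by the normal core of `H`.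
-/

open scoped Pointwise MatrixGroups

section WordNorm

variable {G : Type*} [Group G] {X : Set G}

lemma wordNorm_prod_le_length {l : List G} (hl : ∀ x ∈ l, x ∈ X ∪ X⁻¹) :
    wordNorm X l.prod ≤ l.length :=
  Nat.sInf_le ⟨l, rfl, hl, rfl⟩

lemma exists_list_length_eq_wordNorm (hgen : Subgroup.closure X = ⊤) (g : G) :
    ∃ l : List G, l.length = wordNorm X g ∧ (∀ x ∈ l, x ∈ X ∪ X⁻¹) ∧ l.prod = g := by
  have hg : g ∈ (Subgroup.closure X).toSubmonoid := hgen ▸ Subgroup.mem_top g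
  rw [Subgroup.closure_toSubmonoid] at hg
  obtain ⟨l, hl, hprod⟩ := Submonoid.exists_list_of_mem_closure hg
  exact Nat.sInf_mem (s := {m | ∃ l : List G, l.length = m ∧ _ ∧ l.prod = g})
    ⟨l.length, l, rfl, hl, hprod⟩

lemma wordNorm_one : wordNorm X 1 = 0 :=
  Nat.le_zero.mp (wordNorm_prod_le_length (l := []) (by simp))

lemma wordNorm_mul_le (hgen : Subgroup.closure X = ⊤) (g h : G) :
    wordNorm X (g * h) ≤ wordNorm X g + wordNorm X h := by
  obtain ⟨lg, hlen_g, hlg, rfl⟩ := exists_list_length_eq_wordNorm hgen g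
  obtain ⟨lh, hlen_h, hlh, rfl⟩ := exists_list_length_eq_wordNorm hgen h
  rw [← hlen_g, ← hlen_h, ← List.prod_append, ← List.length_append]
  exact wordNorm_prod_le_length fun x hx => (List.mem_append.mp hx).elim (hlg x) (hlh x)

lemma wordNorm_inv_le (hgen : Subgroup.closure X = ⊤) (g : G) :
    wordNorm X g⁻¹ ≤ wordNorm X g := by
  obtain ⟨l, hlen, hl, rfl⟩ := exists_list_length_eq_wordNorm hgen g
  have hinv : ∀ x ∈ (l.map (·⁻¹)).reverse, x ∈ X ∪ X⁻¹ := by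
    intro x hx
    obtain ⟨y, hy, rfl⟩ := List.mem_map.mp (List.mem_reverse.mp hx)
    simpa [or_comm] using hl y hy
  simpa [← hlen, List.prod_inv_reverse] using wordNorm_prod_le_length hinv

lemma wordNorm_pos (hgen : Subgroup.closure X = ⊤) {g : G} (hg : g ≠ 1) : 0 < wordNorm X g := by
  obtain ⟨l, hlen, -, rfl⟩ := exists_list_length_eq_wordNorm hgen g
  rw [← hlen, List.length_pos_iff]
  rintro rfl
  exact hg List.prod_nil

lemma wordNorm_prod_le_mul_length (hgen : Subgroup.closure X = ⊤) {K : ℕ} :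
    ∀ {l : List G}, (∀ x ∈ l, wordNorm X x ≤ K) → wordNorm X l.prod ≤ K * l.length
  | [], _ => by simp [wordNorm_one]
  | x :: l, hl => by
    rw [List.forall_mem_cons] at hl
    calc wordNorm X (x :: l).prod ≤ wordNorm X x + wordNorm X l.prod := by
          simpa using wordNorm_mul_le hgen x l.prod
      _ ≤ K + K * l.length := add_le_add hl.1 (wordNorm_prod_le_mul_length hgen hl.2)
      _ = K * (x :: l).length := by rw [List.length_cons]; ring

end WordNorm

section Schreier

variable {G : Type*} [Group G] (H : Subgroup G)

lemma exists_quotient_section_one :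
    ∃ t : G ⧸ H → G, t (1 : G) = 1 ∧ ∀ q, (t q : G ⧸ H) = q := by
  classical
  refine ⟨Function.update Quotient.out ((1 : G) : G ⧸ H) 1, by simp, fun q => ?_⟩
  obtain rfl | hq := eq_or_ne q ((1 : G) : G ⧸ H)
  · simp
  · simp [Function.update_of_ne hq]

variable {H}

lemma inv_mul_mul_mem_of_eq_smul {t : G ⧸ H → G} (ht : ∀ q, (t q : G ⧸ H) = q) {g : G}
    {u v : G ⧸ H} (huv : v = g • u) : (t v)⁻¹ * g * t u ∈ H := by
  rw [mul_assoc, ← QuotientGroup.eq, ht, huv]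
  conv_lhs => rw [← ht u]
  rfl

-- Schreier rewriting, which preserves the length of the word.
lemma exists_finite_forall_prod_eq [H.FiniteIndex] {S : Set G} (hS : S.Finite) :
    ∃ T : Set H, T.Finite ∧ ∀ l : List G, (∀ x ∈ l, x ∈ S) → ∀ hl : l.prod ∈ H,
      ∃ l' : List H, l'.length = l.length ∧ (∀ x ∈ l', x ∈ T) ∧ l'.prod = ⟨l.prod, hl⟩ := by
  obtain ⟨t, ht_one, ht⟩ := exists_quotient_section_one H
  let s (g : G) (q : G ⧸ H) : H := ⟨(t (g • q))⁻¹ * g * t q, inv_mul_mul_mem_of_eq_smul ht rfl⟩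
  have rewriting : ∀ l : List G, (∀ x ∈ l, x ∈ S) → ∃ l' : List H, l'.length = l.length ∧
      (∀ x ∈ l', x ∈ Set.image2 s S Set.univ) ∧ t l.prod * l'.prod = l.prod := by
    intro l hl
    induction l with
    | nil => exact ⟨[], rfl, by simp, by simp [ht_one]⟩
    | cons x l ih =>
      rw [List.forall_mem_cons] at hl
      obtain ⟨l', hlen, hl', hprod⟩ := ih hl.2
      refine ⟨s x l.prod :: l', by simp [hlen],
        List.forall_mem_cons.mpr ⟨Set.mem_image2_of_mem hl.1 (Set.mem_univ _), hl'⟩, ?_⟩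
      have hcoset : ((x * l.prod : G) : G ⧸ H) = x • (l.prod : G ⧸ H) := rfl
      simp only [List.prod_cons, hcoset, s, Subgroup.coe_mul]
      conv_rhs => rw [← hprod]
      group
  refine ⟨Set.image2 s S Set.univ, hS.image2 _ Set.finite_univ, fun l hlS hl => ?_⟩
  obtain ⟨l', hlen, hl', hprod⟩ := rewriting l hlS
  have hcoset : (l.prod : G ⧸ H) = (1 : G) := (QuotientGroup.eq.mpr (by simpa using hl)).symm
  rw [hcoset, ht_one, one_mul] at hprod
  exact ⟨l', hlen, hl', Subtype.ext hprod⟩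

lemma exists_wordNorm_map_le_mul {X : Set G} (hfin : X.Finite) (hgen : Subgroup.closure X = ⊤)
    [H.FiniteIndex] {G' : Type*} [Group G'] {Y : Set G'} (hY : Subgroup.closure Y = ⊤)
    (τ : H →* G') : ∃ K : ℕ, ∀ h : H, wordNorm Y (τ h) ≤ K * wordNorm X (h : G) := by
  obtain ⟨T, hT, rewriting⟩ := exists_finite_forall_prod_eq (H := H) (hfin.union hfin.inv)
  obtain ⟨K, hK⟩ := (hT.image fun x => wordNorm Y (τ x)).bddAbove
  refine ⟨K, fun ⟨h, hh⟩ => ?_⟩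
  obtain ⟨l, hlen, hl, rfl⟩ := exists_list_length_eq_wordNorm hgen h
  obtain ⟨l', hlen', hl', hprod⟩ := rewriting l hl hh
  have hK' : ∀ y ∈ l'.map τ, wordNorm Y y ≤ K := by
    intro y hy
    obtain ⟨x, hx, rfl⟩ := List.mem_map.mp hy
    exact hK ⟨x, hl' x hx, rfl⟩
  calc wordNorm Y (τ ⟨l.prod, hh⟩) = wordNorm Y (l'.map τ).prod := by rw [← hprod, map_list_prod]
    _ ≤ K * (l'.map τ).length := wordNorm_prod_le_mul_length hY hK'
    _ = K * wordNorm X l.prod := by rw [List.length_map, hlen', hlen]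

end Schreier

section NormalCore

variable {G : Type*} [Group G] {H L : Subgroup G}

-- The conjugate of `L` by `g` depends only on the coset of `g` modulo `H`.
lemma index_normalCore_le_pow [H.FiniteIndex] (hH : H ≤ Subgroup.normalizer (L : Set G)) :
    L.normalCore.index ≤ L.index ^ H.index := by
  have := H.fintypeQuotientOfFiniteIndex
  have hcore : L.normalCore = ⨅ q : G ⧸ H, L.map (MulAut.conj q.out : G →* G) := by
    rw [Subgroup.normalCore_eq_iInf_map_conj]
    refine le_antisymm (le_iInf fun q => iInf_le _ q.out) (le_iInf fun g => iInf_le_of_le g ?_)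
    obtain ⟨h, hout⟩ := QuotientGroup.mk_out_eq_mul H g
    rintro _ ⟨x, hx, rfl⟩
    refine ⟨h * x * h⁻¹, (hH h.2 x).mp hx, ?_⟩
    simp [hout, mul_assoc]
  calc L.normalCore.index
      ≤ ∏ q : G ⧸ H, (L.map (MulAut.conj q.out : G →* G)).index :=
        hcore ▸ Subgroup.index_iInf_le _
    _ = L.index ^ H.index := by
        simp [Subgroup.index_map_equiv, Subgroup.index_eq_card H]

lemma index_normalCore_map_subtype_le [H.FiniteIndex] (K : Subgroup H) [K.Normal] :
    (K.map H.subtype).normalCore.index ≤ (K.index * H.index) ^ H.index := by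
  have hH : H ≤ Subgroup.normalizer (K.map H.subtype : Set G) := by
    simpa [Subgroup.normalizer_eq_top_iff.mpr ‹K.Normal›, ← MonoidHom.range_eq_map] using
      Subgroup.le_normalizer_map (H := K) H.subtype
  simpa only [Subgroup.index_map_subtype] using index_normalCore_le_pow hH

end NormalCore

section VirtualRetract

variable {G : Type*} [Group G]

/-- `Δ` is polynomially separable with respect to the generating set `X`: every `γ ∉ Δ` is kept
out of the image of `Δ` in some finite quotient `G ⧸ N` whose order is bounded by a fixed
polynomial in the word norm of `γ`. For `Δ = ⊥` this is polynomial residual finiteness growth. -/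
def IsPolynomiallySeparable (X : Set G) (Δ : Subgroup G) : Prop :=
  ∃ C d : ℕ, ∀ γ ∉ Δ, ∃ N : Subgroup G, N.Normal ∧ N.FiniteIndex ∧ γ ∉ Δ ⊔ N ∧
    N.index ≤ C * wordNorm X γ ^ d

/-- `Δ` is a virtual retract of `G`: it is a retract of some finite-index subgroup `H`. -/
def IsVirtualRetract (Δ : Subgroup G) : Prop :=
  ∃ (H : Subgroup G) (_ : H.FiniteIndex) (hΔ : Δ ≤ H) (τ : H →* Δ),
    ∀ δ : Δ, τ (Subgroup.inclusion hΔ δ) = δ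

variable {H Δ : Subgroup G} {hΔ : Δ ≤ H} {τ : H →* Δ}

lemma notMem_sup_of_retract (hτ : ∀ δ : Δ, τ (Subgroup.inclusion hΔ δ) = δ) {N M : Subgroup G}
    [N.Normal] (hNM : N ≤ M) (hN : N ≤ ((M.comap Δ.subtype).comap τ).map H.subtype)
    {γ : H} (hγ : (τ γ : G)⁻¹ * γ ∉ M) : (γ : G) ∉ Δ ⊔ N := by
  rw [Subgroup.mem_sup_of_normal_right]
  rintro ⟨δ, hδ, ν, hν, hprod⟩
  obtain ⟨ν', hν', rfl⟩ := hN hν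
  have hγ_eq : γ = Subgroup.inclusion hΔ ⟨δ, hδ⟩ * ν' := Subtype.ext hprod.symm
  refine hγ ?_
  rw [hγ_eq, map_mul, hτ]
  simpa [mul_assoc] using M.mul_mem (M.inv_mem hν') (hNM hν)

lemma index_comap_dvd_index {G' : Type*} [Group G'] (f : G' →* G) (N : Subgroup G) [N.Normal] :
    (N.comap f).index ∣ N.index := by
  rw [Subgroup.index_comap]
  exact N.relIndex_dvd_index_of_normal _

lemma exists_normal_notMem_sup_of_retract [H.FiniteIndex]
    (hτ : ∀ δ : Δ, τ (Subgroup.inclusion hΔ δ) = δ) {M : Subgroup G} [M.Normal] [M.FiniteIndex]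
    {γ : H} (hγ : (τ γ : G)⁻¹ * γ ∉ M) :
    ∃ N : Subgroup G, N.Normal ∧ N.FiniteIndex ∧ (γ : G) ∉ Δ ⊔ N ∧
      N.index ≤ (M.index * H.index) ^ H.index * M.index := by
  let K : Subgroup H := (M.comap Δ.subtype).comap τ
  have hK_dvd : K.index ∣ M.index := index_comap_dvd_index (Δ.subtype.comp τ) M
  have hM_index : M.index ≠ 0 := Subgroup.FiniteIndex.index_ne_zero
  have : (K.map H.subtype).FiniteIndex := ⟨by
    rw [Subgroup.index_map_subtype]
    exact mul_ne_zero (ne_zero_of_dvd_ne_zero hM_index hK_dvd) Subgroup.FiniteIndex.index_ne_zero⟩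
  refine ⟨(K.map H.subtype).normalCore ⊓ M, inferInstance, inferInstance,
    notMem_sup_of_retract hτ inf_le_right (inf_le_left.trans (Subgroup.normalCore_le _)) hγ, ?_⟩
  calc ((K.map H.subtype).normalCore ⊓ M).index
      ≤ (K.map H.subtype).normalCore.index * M.index := Subgroup.index_inf_le
    _ ≤ (K.index * H.index) ^ H.index * M.index := by
        gcongr
        exact index_normalCore_map_subtype_le K
    _ ≤ (M.index * H.index) ^ H.index * M.index := by
        gcongr
        exact Nat.le_of_dvd (Nat.pos_of_ne_zero hM_index) hK_dvd

lemma exists_wordNorm_inv_map_mul_le {X : Set G} (hfin : X.Finite)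
    (hgen : Subgroup.closure X = ⊤) [H.FiniteIndex] (τ : H →* G) :
    ∃ K : ℕ, ∀ h : H, wordNorm X ((τ h)⁻¹ * h) ≤ K * wordNorm X (h : G) := by
  obtain ⟨K, hK⟩ := exists_wordNorm_map_le_mul hfin hgen hgen τ
  refine ⟨K + 1, fun h => ?_⟩
  calc wordNorm X ((τ h)⁻¹ * h) ≤ wordNorm X (τ h)⁻¹ + wordNorm X (h : G) :=
        wordNorm_mul_le hgen _ _
    _ ≤ K * wordNorm X (h : G) + wordNorm X (h : G) := by
        gcongr
        exact (wordNorm_inv_le hgen _).trans (hK h)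
    _ = (K + 1) * wordNorm X (h : G) := by ring

theorem IsVirtualRetract.isPolynomiallySeparable {X : Set G} (hfin : X.Finite)
    (hgen : Subgroup.closure X = ⊤) (hbot : IsPolynomiallySeparable X (⊥ : Subgroup G))
    (hret : IsVirtualRetract Δ) : IsPolynomiallySeparable X Δ := by
  obtain ⟨H, _, hΔ, τ, hτ⟩ := hret
  obtain ⟨C, d, hsep⟩ := hbot
  obtain ⟨K, hK⟩ := exists_wordNorm_inv_map_mul_le hfin hgen (Δ.subtype.comp τ)
  set k := H.index
  set B := C * K ^ d
  refine ⟨H.normalCore.index + (B * k) ^ k * B, d * (k + 1), fun γ hγ => ?_⟩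
  set n := wordNorm X γ
  have hn : 0 < n := wordNorm_pos hgen fun h => hγ (h ▸ Δ.one_mem)
  by_cases hγH : γ ∈ H
  · have hne : (τ ⟨γ, hγH⟩ : G)⁻¹ * γ ∉ (⊥ : Subgroup G) := fun h =>
      hγ (inv_mul_eq_one.mp (Subgroup.mem_bot.mp h) ▸ (τ ⟨γ, hγH⟩).2)
    obtain ⟨M, _, _, hM, hM_index⟩ := hsep _ hne
    rw [bot_sup_eq] at hM
    obtain ⟨N, hN_normal, hN_fin, hN, hN_index⟩ := exists_normal_notMem_sup_of_retract hτ hM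
    refine ⟨N, hN_normal, hN_fin, hN, hN_index.trans ?_⟩
    have hMB : M.index ≤ B * n ^ d := calc
      M.index ≤ C * (K * n) ^ d := by
        grw [hM_index]
        gcongr
        exact hK ⟨γ, hγH⟩
      _ = B * n ^ d := by rw [mul_pow, ← mul_assoc]
    calc (M.index * k) ^ k * M.index ≤ (B * n ^ d * k) ^ k * (B * n ^ d) := by gcongr
      _ = (B * k) ^ k * B * n ^ (d * (k + 1)) := by ring
      _ ≤ _ := by gcongr; exact Nat.le_add_left _ _
  · refine ⟨H.normalCore, inferInstance, inferInstance,
      fun h => hγH (sup_le hΔ H.normalCore_le h), ?_⟩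
    calc H.normalCore.index ≤ H.normalCore.index + (B * k) ^ k * B := Nat.le_add_right _ _
      _ ≤ _ := Nat.le_mul_of_pos_right _ (by positivity)

end VirtualRetract

section Wreath

/-- The permutational wreath product of `G` with the symmetric group on `V`. In a pair `(f, σ)`
the coordinate `f v` is indexed by the target `v` of the arrow `σ⁻¹ v ↦ v`. -/
abbrev PermWreath (G V : Type*) [Group G] : Type _ :=
  (V → G) ⋊[mulAutArrow] Equiv.Perm V

namespace PermWreath

variable {G V : Type*} [Group G]

lemma mul_left_apply (w w' : PermWreath G V) (v : V) :
    (w * w').left v = w.left v * w'.left (w.right⁻¹ v) := rfl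

/-- The subgroup of the wreath product fixing the point `v`. -/
def stabilizer (G : Type*) [Group G] (v : V) : Subgroup (PermWreath G V) :=
  (MulAction.stabilizer (Equiv.Perm V) v).comap SemidirectProduct.rightHom

instance [Finite V] (v : V) : (stabilizer G v).FiniteIndex :=
  ⟨by
    rw [stabilizer, Subgroup.index_comap_of_surjective _ SemidirectProduct.rightHom_surjective]
    exact Subgroup.FiniteIndex.index_ne_zero⟩

/-- The homomorphism reading off the `v`-th coordinate of the elements that fix `v`. The
retraction in Marshall Hall's theorem is of this form. -/
def stabilizerCoord (G : Type*) [Group G] (v : V) : stabilizer G v →* G where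
  toFun w := w.1.left v
  map_one' := rfl
  map_mul' w w' := by
    have hfix : w.1.right⁻¹ v = v := Equiv.Perm.inv_eq_iff_eq.mpr w.2.symm
    rw [Subgroup.coe_mul, mul_left_apply, hfix]

end PermWreath

end Wreath

section Transports

variable {G : Type*} [Group G] {Δ : Subgroup G} {V : Finset (G ⧸ Δ)}

/-- Given coset representatives `t`, the wreath product element `w` imitates left multiplication
by `g` at the coset `u`: it moves `u` to `v`, and its coordinate there is the Schreier element
of `g`. The elements of this form compose like the arrows of the action groupoid of `G ⧸ Δ`. -/
def Transports (t : G ⧸ Δ → G) (w : PermWreath Δ V) (g : G) (u v : V) : Prop :=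
  w.right u = v ∧ (w.left v : G) = (t v)⁻¹ * g * t u

variable {t : G ⧸ Δ → G} {w w' : PermWreath Δ V} {g g' : G} {u v v' : V}

lemma transports_one (t : G ⧸ Δ → G) (u : V) : Transports t (1 : PermWreath Δ V) 1 u u :=
  ⟨rfl, by simp⟩

lemma Transports.mul (h' : Transports t w' g' v v') (h : Transports t w g u v) :
    Transports t (w' * w) (g' * g) u v' := by
  have hpre : w'.right⁻¹ v' = v := Equiv.Perm.inv_eq_iff_eq.mpr h'.1.symm
  refine ⟨by rw [SemidirectProduct.mul_right, Equiv.Perm.mul_apply, h.1, h'.1], ?_⟩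
  rw [PermWreath.mul_left_apply, Subgroup.coe_mul, h'.2, hpre, h.2]
  group

lemma Transports.inv (h : Transports t w g u v) : Transports t w⁻¹ g⁻¹ v u := by
  have hpre : w.right⁻¹ v = u := Equiv.Perm.inv_eq_iff_eq.mpr h.1.symm
  refine ⟨hpre, ?_⟩
  have hleft : w.left v * w⁻¹.left u = 1 := by
    rw [← hpre, ← PermWreath.mul_left_apply, mul_inv_cancel, SemidirectProduct.one_left,
      Pi.one_apply]
  rw [eq_inv_of_mul_eq_one_right hleft, Subgroup.coe_inv, h.2]
  group

lemma exists_perm_extending_smul {α : Type*} [MulAction G α] (V : Finset α) (g : G) :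
    ∃ σ : Equiv.Perm V, ∀ v : V, g • (v : α) ∈ V → (σ v : α) = g • (v : α) :=
  Set.MapsTo.exists_equiv_extend_of_card_eq (s := {v : V | g • (v : α) ∈ V}) (by simp)
    (fun _ hv => hv) fun _ _ _ _ h => Subtype.ext (smul_left_cancel g h)

lemma exists_forall_transports (V : Finset (G ⧸ Δ)) (ht : ∀ q, (t q : G ⧸ Δ) = q) (g : G) :
    ∃ w : PermWreath Δ V, ∀ u v : V, (v : G ⧸ Δ) = g • (u : G ⧸ Δ) → Transports t w g u v := by
  classical
  obtain ⟨σ, hσ⟩ := exists_perm_extending_smul V g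
  let c (v : V) : Δ :=
    if h : (v : G ⧸ Δ) = g • (σ⁻¹ v : G ⧸ Δ) then ⟨_, inv_mul_mul_mem_of_eq_smul ht h⟩ else 1
  refine ⟨⟨c, σ⟩, fun u v huv => ?_⟩
  have hσuv : σ u = v := Subtype.ext ((hσ u (huv ▸ v.2)).trans huv.symm)
  have hpre : σ⁻¹ v = u := Equiv.Perm.inv_eq_iff_eq.mpr hσuv.symm
  have hv : (v : G ⧸ Δ) = g • (σ⁻¹ v : G ⧸ Δ) := by rw [hpre, huv]
  refine ⟨hσuv, ?_⟩
  simp only [c, dif_pos hv, hpre]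

end Transports

section MarshallHall

variable {ι : Type*} {Δ : Subgroup (FreeGroup ι)} {V : Finset (FreeGroup ι ⧸ Δ)}
  {t : FreeGroup ι ⧸ Δ → FreeGroup ι} {w : ι → PermWreath Δ V}

lemma transports_lift_letter
    (hw : ∀ i, ∀ u v : V, (v : FreeGroup ι ⧸ Δ) = FreeGroup.of i • (u : FreeGroup ι ⧸ Δ) →
      Transports t (w i) (FreeGroup.of i) u v)
    (x : ι × Bool) {u v : V}
    (huv : (v : FreeGroup ι ⧸ Δ) = FreeGroup.mk [x] • (u : FreeGroup ι ⧸ Δ)) :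
    Transports t (FreeGroup.lift w (FreeGroup.mk [x])) (FreeGroup.mk [x]) u v := by
  obtain ⟨i, _ | _⟩ := x
  · have hletter : FreeGroup.mk [(i, false)] = (FreeGroup.of i)⁻¹ := rfl
    rw [hletter] at huv ⊢
    rw [map_inv, FreeGroup.lift_apply_of]
    exact (hw i v u (by rw [huv, smul_inv_smul])).inv
  · have hletter : FreeGroup.mk [(i, true)] = FreeGroup.of i := rfl
    rw [hletter] at huv ⊢
    rw [FreeGroup.lift_apply_of]
    exact hw i u v huv

lemma transports_lift_mk
    (hw : ∀ i, ∀ u v : V, (v : FreeGroup ι ⧸ Δ) = FreeGroup.of i • (u : FreeGroup ι ⧸ Δ) →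
      Transports t (w i) (FreeGroup.of i) u v)
    {v₀ : V} (hv₀ : (v₀ : FreeGroup ι ⧸ Δ) = (1 : FreeGroup ι)) :
    ∀ (L : List (ι × Bool)), (∀ L', L' <:+ L → (FreeGroup.mk L' : FreeGroup ι ⧸ Δ) ∈ V) →
      ∀ v : V, (v : FreeGroup ι ⧸ Δ) = FreeGroup.mk L →
        Transports t (FreeGroup.lift w (FreeGroup.mk L)) (FreeGroup.mk L) v₀ v
  | [], _, v, hv => by
    obtain rfl : v = v₀ := Subtype.ext (hv.trans hv₀.symm)
    simpa only [← FreeGroup.one_eq_mk, map_one] using transports_one t v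
  | x :: L, hL, v, hv => by
    have hmk : FreeGroup.mk (x :: L) = FreeGroup.mk [x] * FreeGroup.mk L := by
      rw [FreeGroup.mul_mk, List.singleton_append]
    let u : V := ⟨FreeGroup.mk L, hL L (List.suffix_cons x L)⟩
    have hu := transports_lift_mk hw hv₀ L
      (fun L' hL' => hL L' (hL'.trans (List.suffix_cons x L))) u rfl
    have hx : Transports t (FreeGroup.lift w (FreeGroup.mk [x])) (FreeGroup.mk [x]) u v :=
      transports_lift_letter hw x (by rw [hv, hmk]; rfl)
    rw [hmk, map_mul]
    exact hx.mul hu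

-- The vertices of the Stallings core graph of the subgroup generated by `S`.
lemma exists_finset_forall_suffix_mem [DecidableEq ι] (Δ : Subgroup (FreeGroup ι))
    (S : Finset (FreeGroup ι)) :
    ∃ V : Finset (FreeGroup ι ⧸ Δ), ((1 : FreeGroup ι) : FreeGroup ι ⧸ Δ) ∈ V ∧
      ∀ s ∈ S, ∀ L, L <:+ s.toWord → (FreeGroup.mk L : FreeGroup ι ⧸ Δ) ∈ V := by
  classical
  refine ⟨insert ((1 : FreeGroup ι) : FreeGroup ι ⧸ Δ) (S.biUnion fun s =>
    s.toWord.tails.toFinset.image fun L => (FreeGroup.mk L : FreeGroup ι ⧸ Δ)),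
    Finset.mem_insert_self _ _, fun s hs L hL => Finset.mem_insert_of_mem ?_⟩
  exact Finset.mem_biUnion.mpr ⟨s, hs, Finset.mem_image.mpr ⟨L, by simpa using hL, rfl⟩⟩

-- The partial action of the generators on the core graph extends to permutations of its
-- vertices. Recording Schreier elements along the edges then gives the retraction.
theorem isVirtualRetract_of_fg (hΔ : Δ.FG) : IsVirtualRetract Δ := by
  classical
  obtain ⟨S, rfl⟩ := hΔ
  set Δ := Subgroup.closure (S : Set (FreeGroup ι))
  obtain ⟨t, ht_one, ht⟩ := exists_quotient_section_one Δ
  obtain ⟨V, hV_one, hV⟩ := exists_finset_forall_suffix_mem Δ S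
  choose w hw using fun i => exists_forall_transports V ht (FreeGroup.of i)
  let v₀ : V := ⟨(1 : FreeGroup ι), hV_one⟩
  have transports_self : ∀ δ ∈ Δ, Transports t (FreeGroup.lift w δ) δ v₀ v₀ := by
    intro δ hδ
    induction hδ using Subgroup.closure_induction with
    | mem s hs =>
      have hv₀ : (v₀ : FreeGroup ι ⧸ Δ) = FreeGroup.mk s.toWord := by
        rw [FreeGroup.mk_toWord]
        exact QuotientGroup.eq.mpr (by simpa using Subgroup.subset_closure hs)
      simpa only [FreeGroup.mk_toWord] using transports_lift_mk hw rfl s.toWord (hV s hs) v₀ hv₀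
    | one => simpa only [map_one] using transports_one t v₀
    | mul δ δ' _ _ h h' => simpa only [map_mul] using h.mul h'
    | inv δ _ h => simpa only [map_inv] using h.inv
  let Θ := FreeGroup.lift w
  let H := (PermWreath.stabilizer Δ v₀).comap Θ
  let τ : H →* Δ := (PermWreath.stabilizerCoord Δ v₀).comp (Θ.subgroupComap _)
  refine ⟨H, ⟨?_⟩, fun δ hδ => (transports_self δ hδ).1, τ, fun δ => Subtype.ext ?_⟩
  · exact (Subgroup.index_comap _ _).trans_ne Subgroup.FiniteIndex.index_ne_zero
  · exact (transports_self δ δ.2).2.trans (by simp [v₀, ht_one])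

end MarshallHall

section LinearGroup

lemma two_pow_le_centralBinom : ∀ n : ℕ, 2 ^ n ≤ n.centralBinom
  | 0 => by simp
  | n + 1 => by
    refine Nat.le_of_mul_le_mul_left ?_ n.succ_pos
    calc (n + 1) * 2 ^ (n + 1) = 2 * (n + 1) * 2 ^ n := by ring
      _ ≤ 2 * (2 * n + 1) * n.centralBinom :=
        Nat.mul_le_mul (by lia) (two_pow_le_centralBinom n)
      _ = (n + 1) * (n + 1).centralBinom := (Nat.succ_mul_centralBinom_succ n).symm

lemma exists_le_two_mul_not_dvd {N n : ℕ} (hN : N ≠ 0) (hlt : N < 2 ^ n) :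
    ∃ m, 1 ≤ m ∧ m ≤ 2 * n ∧ ¬ m ∣ N := by
  by_contra! hdvd
  have hlcm : Nat.lcmUpto (2 * n) ∣ N := Finset.lcm_dvd fun m hm =>
    hdvd m (Finset.mem_Icc.mp hm).1 (Finset.mem_Icc.mp hm).2
  have hcentral : n.centralBinom ∣ N := (Chebyshev.choose_dvd_lcmUpto (by lia)).trans hlcm
  exact hlt.not_ge
    ((two_pow_le_centralBinom n).trans (Nat.le_of_dvd (Nat.pos_of_ne_zero hN) hcentral))

variable {G : Type*} [Group G] {X : Set G}

lemma exists_norm_map_le_two_pow (hfin : X.Finite) (hgen : Subgroup.closure X = ⊤) {R : Type*}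
    [NormedRing R] (f : G →* R) :
    ∃ b : ℕ, ∀ g, ‖f g‖ ≤ 2 ^ (b * (wordNorm X g + 1)) := by
  obtain ⟨B, hB⟩ := ((hfin.union hfin.inv).image fun x => ‖f x‖).bddAbove
  obtain ⟨b, hb⟩ := exists_nat_ge (max B ‖(1 : R)‖)
  have hb_two : max B ‖(1 : R)‖ ≤ 2 ^ b := hb.trans (mod_cast b.lt_two_pow_self.le)
  refine ⟨b, fun g => ?_⟩
  obtain ⟨l, hlen, hl, rfl⟩ := exists_list_length_eq_wordNorm hgen g
  rw [← hlen]
  clear hlen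
  induction l with
  | nil => simpa using (le_max_right _ _).trans hb_two
  | cons x l ih =>
    rw [List.forall_mem_cons] at hl
    have hx : ‖f x‖ ≤ 2 ^ b := (hB ⟨x, hl.1, rfl⟩).trans ((le_max_left _ _).trans hb_two)
    calc ‖f (x :: l).prod‖ ≤ ‖f x‖ * ‖f l.prod‖ := by
          rw [List.prod_cons, map_mul]
          exact norm_mul_le _ _
      _ ≤ 2 ^ b * 2 ^ (b * (l.length + 1)) := by
          gcongr
          exact ih hl.2
      _ = 2 ^ (b * ((x :: l).length + 1)) := by rw [List.length_cons]; ring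

lemma exists_norm_map_sub_one_lt_two_pow (hfin : X.Finite) (hgen : Subgroup.closure X = ⊤)
    {R : Type*} [NormedRing R] (f : G →* R) :
    ∃ B : ℕ, ∀ g ≠ 1, ‖f g - 1‖ < 2 ^ (B * wordNorm X g) := by
  obtain ⟨b, hb⟩ := exists_norm_map_le_two_pow hfin hgen f
  refine ⟨2 * b + 2, fun g hg => ?_⟩
  have hpos : 0 < wordNorm X g := wordNorm_pos hgen hg
  have hone : ‖(1 : R)‖ ≤ 2 ^ (b * (wordNorm X g + 1)) := by
    refine (by simpa [wordNorm_one] using hb 1 : ‖(1 : R)‖ ≤ 2 ^ b).trans ?_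
    gcongr
    · norm_num
    · exact Nat.le_mul_of_pos_right _ (by lia)
  calc ‖f g - 1‖ ≤ ‖f g‖ + ‖(1 : R)‖ := norm_sub_le _ _
    _ ≤ 2 ^ (b * (wordNorm X g + 1)) + 2 ^ (b * (wordNorm X g + 1)) := add_le_add (hb g) hone
    _ = 2 ^ (b * (wordNorm X g + 1) + 1) := by ring
    _ < 2 ^ ((2 * b + 2) * wordNorm X g) := by
        gcongr
        · norm_num
        · nlinarith

variable {n : Type*} [Fintype n] [DecidableEq n]

attribute [local instance] Matrix.linftyOpNormedRing in
lemma norm_entry_le_linfty_opNorm {R : Type*} [NormedRing R] (A : Matrix n n R) (i j : n) :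
    ‖A i j‖ ≤ ‖A‖ := by
  rw [← coe_nnnorm, ← coe_nnnorm, NNReal.coe_le_coe, Matrix.linfty_opNNNorm_def]
  calc ‖A i j‖₊ ≤ ∑ j, ‖A i j‖₊ :=
        Finset.single_le_sum_of_canonicallyOrdered (f := fun j => ‖A i j‖₊) (Finset.mem_univ j)
    _ ≤ _ := Finset.le_sup (f := fun i => ∑ j, ‖A i j‖₊) (Finset.mem_univ i)

attribute [local instance] Matrix.linftyOpNormedRing in
lemma exists_natAbs_entry_sub_one_lt_two_pow (hfin : X.Finite) (hgen : Subgroup.closure X = ⊤)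
    (ρ : G →* GL n ℤ) :
    ∃ B : ℕ, ∀ g ≠ 1, ∀ i j,
      ((ρ g : Matrix n n ℤ) i j - (1 : Matrix n n ℤ) i j).natAbs < 2 ^ (B * wordNorm X g) := by
  obtain ⟨B, hB⟩ := exists_norm_map_sub_one_lt_two_pow hfin hgen ((Units.coeHom _).comp ρ)
  refine ⟨B, fun g hg i j => ?_⟩
  have hentry := (norm_entry_le_linfty_opNorm _ i j).trans_lt (hB g hg)
  rw [← coe_nnnorm, ← NNReal.natCast_natAbs] at hentry
  exact_mod_cast hentry

variable (n) in
lemma card_generalLinearGroup_zmod_le (m : ℕ) [NeZero m] :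
    Nat.card (GL n (ZMod m)) ≤ m ^ Fintype.card n ^ 2 := by
  calc Nat.card (GL n (ZMod m)) ≤ Nat.card (Matrix n n (ZMod m)) :=
        Nat.card_le_card_of_injective _ Units.val_injective
    _ = m ^ Fintype.card n ^ 2 := by
        simp [Matrix, ← pow_mul, sq]

lemma dvd_of_map_castRingHom_eq_one {m : ℕ} {A : GL n ℤ}
    (hA : Matrix.GeneralLinearGroup.map (Int.castRingHom (ZMod m)) A = 1) (i j : n) :
    (m : ℤ) ∣ (A : Matrix n n ℤ) i j - (1 : Matrix n n ℤ) i j := by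
  have hentry := congrArg (fun B : GL n (ZMod m) => (B : Matrix n n (ZMod m)) i j) hA
  rw [← ZMod.intCast_zmod_eq_zero_iff_dvd, Int.cast_sub, sub_eq_zero]
  simpa [Matrix.one_apply] using hentry

theorem isPolynomiallySeparable_bot_of_injective (hfin : X.Finite)
    (hgen : Subgroup.closure X = ⊤) {ρ : G →* GL n ℤ} (hρ : Function.Injective ρ) :
    IsPolynomiallySeparable X (⊥ : Subgroup G) := by
  obtain ⟨B, hB⟩ := exists_natAbs_entry_sub_one_lt_two_pow hfin hgen ρ
  refine ⟨(2 * B) ^ Fintype.card n ^ 2, Fintype.card n ^ 2, fun γ hγ => ?_⟩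
  rw [Subgroup.mem_bot] at hγ
  obtain ⟨i, j, hij⟩ : ∃ i j, (ρ γ : Matrix n n ℤ) i j ≠ (1 : Matrix n n ℤ) i j := by
    by_contra! h
    exact hγ (hρ (by rw [map_one]; exact Units.ext (Matrix.ext h)))
  obtain ⟨m, hm_pos, hm_le, hm⟩ :=
    exists_le_two_mul_not_dvd (Int.natAbs_ne_zero.mpr (sub_ne_zero.mpr hij)) (hB γ hγ i j)
  have : NeZero m := ⟨by lia⟩
  let φ := (Matrix.GeneralLinearGroup.map (Int.castRingHom (ZMod m))).comp ρ
  refine ⟨φ.ker, inferInstance, inferInstance, ?_, ?_⟩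
  · rw [bot_sup_eq]
    exact fun hker => hm (Int.natCast_dvd.mp (dvd_of_map_castRingHom_eq_one hker i j))
  · calc φ.ker.index = Nat.card φ.range := Subgroup.index_ker φ
      _ ≤ Nat.card (GL n (ZMod m)) := Subgroup.card_le_card_group _
      _ ≤ m ^ Fintype.card n ^ 2 := card_generalLinearGroup_zmod_le n m
      _ ≤ (2 * (B * wordNorm X γ)) ^ Fintype.card n ^ 2 := by gcongr
      _ = _ := by rw [← mul_assoc, mul_pow]

end LinearGroup

section PingPong

/-- The nonzero vectors of `ℤ²` as an `SL(2, ℤ)`-set, on which the ping-pong is played. -/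
def nonzeroVectors : SubMulAction SL(2, ℤ) (Fin 2 → ℤ) where
  carrier := {v | v ≠ 0}
  smul_mem' g _ hv := (smul_ne_zero_iff_ne g).mpr hv

/-- The cone of nonzero vectors `(x, y)` whose slope `x / y` is within distance `1` of `p`. -/
def slopeCone (p : ℤ) : Set nonzeroVectors :=
  {v | |v.1 0 - p * v.1 1| ≤ |v.1 1|}

/-- The Schottky generator with attracting slope `p` and repelling slope `q`: as a Möbius
transformation it is `z ↦ p - 1 / (z - q)`. -/
def schottkyGen (p q : ℤ) : SL(2, ℤ) :=
  ⟨!![p, -1 - p * q; 1, -q], by rw [Matrix.det_fin_two_of]; ring⟩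

lemma slopeCone_nonempty (p : ℤ) : (slopeCone p).Nonempty :=
  ⟨⟨![p, 1], fun h => one_ne_zero (congrFun h 1)⟩, by simp [slopeCone]⟩

lemma disjoint_slopeCone {p q : ℤ} (hpq : 3 ≤ |p - q|) :
    Disjoint (slopeCone p) (slopeCone q) := by
  rw [Set.disjoint_left]
  rintro ⟨v, hv⟩ (hp : |v 0 - p * v 1| ≤ |v 1|) (hq : |v 0 - q * v 1| ≤ |v 1|)
  have hbound : |p - q| * |v 1| ≤ 2 * |v 1| := calc
    |p - q| * |v 1| = |(v 0 - q * v 1) - (v 0 - p * v 1)| := by rw [← abs_mul]; ring_nf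
    _ ≤ |v 0 - q * v 1| + |v 0 - p * v 1| := abs_sub _ _
    _ ≤ 2 * |v 1| := by linarith
  have hv₁ : v 1 = 0 := abs_nonpos_iff.mp (by nlinarith [abs_nonneg (v 1)])
  have hv₀ : v 0 = 0 := by simpa [hv₁] using hp
  exact hv (funext (Fin.forall_fin_two.mpr ⟨hv₀, hv₁⟩))

lemma schottkyGen_smul_compl_subset (p q : ℤ) :
    schottkyGen p q • (slopeCone q)ᶜ ⊆ slopeCone p := by
  rintro _ ⟨⟨v, hv⟩, hvq : ¬ |v 0 - q * v 1| ≤ |v 1|, rfl⟩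
  have hsmul : schottkyGen p q • v = ![p * v 0 + (-1 - p * q) * v 1, v 0 - q * v 1] := by
    rw [Matrix.SpecialLinearGroup.smul_def]
    ext i
    fin_cases i <;> simp [schottkyGen, Matrix.mulVec, dotProduct, sub_eq_add_neg]
  change |(schottkyGen p q • v) 0 - p * (schottkyGen p q • v) 1| ≤ |(schottkyGen p q • v) 1|
  rw [hsmul]
  calc |p * v 0 + (-1 - p * q) * v 1 - p * (v 0 - q * v 1)| = |v 1| := by
        rw [← abs_neg (v 1)]; ring_nf
    _ ≤ |v 0 - q * v 1| := (not_le.mp hvq).le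

lemma schottkyGen_inv_smul_compl_subset (p q : ℤ) :
    (schottkyGen p q)⁻¹ • (slopeCone p)ᶜ ⊆ slopeCone q := by
  have h := Set.smul_set_subset_iff.mp (schottkyGen_smul_compl_subset p q)
  rw [Set.smul_set_subset_iff]
  intro v hv
  by_contra hq
  exact hv (by simpa using h hq)

lemma exists_injective_freeGroup_nat_specialLinearGroup :
    ∃ ρ : FreeGroup ℕ →* SL(2, ℤ), Function.Injective ρ := by
  have separated {a b : ℤ} (hab : a ≠ b) : Disjoint (slopeCone (3 * a)) (slopeCone (3 * b)) :=
    disjoint_slopeCone (by rw [le_abs]; lia)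
  exact ⟨_, FreeGroup.injective_lift_of_ping_pong
    (fun i : ℕ => schottkyGen (3 * (2 * i)) (3 * (2 * i + 1)))
    (fun i => slopeCone (3 * (2 * i))) (fun i => slopeCone (3 * (2 * i + 1)))
    (fun _ => slopeCone_nonempty _) (fun i j hij => separated (by lia))
    (fun i j hij => separated (by lia)) (fun i j => separated (by lia))
    (fun _ => schottkyGen_smul_compl_subset _ _)
    (fun _ => schottkyGen_inv_smul_compl_subset _ _)⟩

lemma exists_injective_freeGroup_generalLinearGroup (ι : Type*) [Countable ι] :
    ∃ ρ : FreeGroup ι →* GL (Fin 2) ℤ, Function.Injective ρ := by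
  obtain ⟨e, he⟩ := exists_injective_nat ι
  obtain ⟨ρ, hρ⟩ := exists_injective_freeGroup_nat_specialLinearGroup
  exact ⟨(Matrix.SpecialLinearGroup.toGL.comp ρ).comp (FreeGroup.map e),
    (Matrix.SpecialLinearGroup.toGL_injective.comp hρ).comp (FreeGroup.map_injective he)⟩

end PingPong

section FreeGroupSeparability

universe u

lemma countable_of_finite_of_closure_eq_top {G : Type*} [Group G] {X : Set G} (hfin : X.Finite)
    (hgen : Subgroup.closure X = ⊤) : Countable G := by
  have : Finite X := hfin
  have hsurj : Function.Surjective (FreeGroup.lift ((↑) : X → G)) := by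
    rw [← MonoidHom.range_eq_top, ← FreeGroup.closure_eq_range, hgen]
  exact hsurj.countable

lemma index_normalCore_sup_ker_le_card {G Q : Type*} [Group G] [Group Q] [Finite Q]
    (Δ : Subgroup G) (φ : G →* Q) : (Δ ⊔ φ.ker).normalCore.index ≤ Nat.card Q := calc
  (Δ ⊔ φ.ker).normalCore.index ≤ φ.ker.index :=
    Subgroup.index_antitone (Subgroup.normal_le_normalCore.mpr le_sup_right)
  _ = Nat.card φ.range := Subgroup.index_ker φ
  _ ≤ Nat.card Q := Subgroup.card_le_card_group _

theorem IsPolynomiallySeparable.exists_hom {G : Type u} [Group G] {X : Set G} {Δ : Subgroup G}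
    (hgen : Subgroup.closure X = ⊤) (hΔ : IsPolynomiallySeparable X Δ) :
    ∃ C D : ℝ, 0 < C ∧ 0 < D ∧ ∀ γ ∉ Δ, ∃ (Q : Type u) (_ : Group Q) (_ : Fintype Q) (φ : G →* Q),
      γ ∉ Δ ⊔ φ.ker ∧ (Fintype.card Q : ℝ) ≤ C * (wordNorm X γ : ℝ) ^ D := by
  obtain ⟨C, d, hsep⟩ := hΔ
  refine ⟨C + 1, d + 1, by positivity, by positivity, fun γ hγ => ?_⟩
  obtain ⟨N, _, _, hN, hN_index⟩ := hsep γ hγ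
  have hnorm : (1 : ℝ) ≤ wordNorm X γ :=
    mod_cast wordNorm_pos hgen fun h => hγ (h ▸ Δ.one_mem)
  have := N.fintypeQuotientOfFiniteIndex
  refine ⟨G ⧸ N, inferInstance, inferInstance, QuotientGroup.mk' N,
    by rwa [QuotientGroup.ker_mk'], ?_⟩
  calc (Fintype.card (G ⧸ N) : ℝ) = N.index := by
        rw [Subgroup.index_eq_card, Nat.card_eq_fintype_card]
    _ ≤ C * (wordNorm X γ : ℝ) ^ d := mod_cast hN_index
    _ ≤ (C + 1) * (wordNorm X γ : ℝ) ^ (d + 1) := by gcongr <;> linarith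
    _ = (C + 1) * (wordNorm X γ : ℝ) ^ (d + 1 : ℝ) := by norm_cast

theorem isPolynomiallySeparable_of_fg {ι : Type*} {X : Set (FreeGroup ι)} (hfin : X.Finite)
    (hgen : Subgroup.closure X = ⊤) {Δ : Subgroup (FreeGroup ι)} (hΔ : Δ.FG) :
    IsPolynomiallySeparable X Δ := by
  have : Countable (FreeGroup ι) := countable_of_finite_of_closure_eq_top hfin hgen
  have : Countable ι := FreeGroup.of_injective.countable
  obtain ⟨ρ, hρ⟩ := exists_injective_freeGroup_generalLinearGroup ι
  have hbot := isPolynomiallySeparable_bot_of_injective hfin hgen hρ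
  exact (isVirtualRetract_of_fg hΔ).isPolynomiallySeparable hfin hgen hbot

theorem free_effective_separability_general {ι : Type u} {X : Set (FreeGroup ι)}
    (hfin : X.Finite) (hgen : Subgroup.closure X = ⊤) {Δ₀ : Subgroup (FreeGroup ι)}
    (hΔ₀ : Δ₀.FG) :
    ∃ C D : ℝ, 0 < C ∧ 0 < D ∧
      ∀ γ : FreeGroup ι, γ ∉ Δ₀ →
        ∃ (Q : Type u) (_ : Group Q) (_ : Fintype Q) (φ : FreeGroup ι →* Q),
          φ γ ∉ Δ₀.map φ ∧
          (Fintype.card Q : ℝ) ≤ C * (wordNorm X γ : ℝ) ^ D ∧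
          Δ₀ ≤ Δ₀ ⊔ φ.ker ∧
          γ ∉ Δ₀ ⊔ φ.ker ∧
          (Δ₀ ⊔ φ.ker).index ≤ Fintype.card Q ∧
          (Δ₀ ⊔ φ.ker).normalCore.index ≤ Fintype.card Q := by
  obtain ⟨C, D, hC, hD, hsep⟩ := (isPolynomiallySeparable_of_fg hfin hgen hΔ₀).exists_hom hgen
  refine ⟨C, D, hC, hD, fun γ hγ => ?_⟩
  obtain ⟨Q, _, _, φ, hφ, hcard⟩ := hsep γ hγ
  have hcore : (Δ₀ ⊔ φ.ker).normalCore.index ≤ Fintype.card Q := by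
    simpa only [Nat.card_eq_fintype_card] using index_normalCore_sup_ker_le_card Δ₀ φ
  have : (Δ₀ ⊔ φ.ker).FiniteIndex := Subgroup.finiteIndex_of_le (le_sup_right : φ.ker ≤ _)
  refine ⟨Q, inferInstance, inferInstance, φ, ?_, hcard, le_sup_left, hφ, ?_, hcore⟩
  · rwa [← Subgroup.mem_comap, Subgroup.comap_map_eq]
  · exact (Subgroup.index_antitone (Subgroup.normalCore_le _)).trans hcore

end FreeGroupSeparability

/-- Corollary 1.2 (free case): finitely generated subgroups of a free group of rank
`r ≥ 2` can be separated by finite quotients of size polynomial in the word length, with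
the same bound for the index of the separating subgroup and of its normal core. -/
theorem free_effective_separability (r : ℕ) (hr : 2 ≤ r)
    (Δ₀ : Subgroup (FreeGroup (Fin r))) (hΔ₀ : Δ₀.FG) :
    ∃ C D : ℝ, 0 < C ∧ 0 < D ∧
      ∀ γ : FreeGroup (Fin r), γ ∉ Δ₀ →
        ∃ (Q : Type) (_ : Group Q) (_ : Fintype Q) (φ : FreeGroup (Fin r) →* Q),
          φ γ ∉ Δ₀.map φ ∧
          (Fintype.card Q : ℝ) ≤
            C * (wordNorm (Set.range (FreeGroup.of : Fin r → FreeGroup (Fin r))) γ : ℝ) ^ D ∧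
          Δ₀ ≤ Δ₀ ⊔ φ.ker ∧
          γ ∉ Δ₀ ⊔ φ.ker ∧
          (Δ₀ ⊔ φ.ker).index ≤ Fintype.card Q ∧
          (Δ₀ ⊔ φ.ker).normalCore.index ≤ Fintype.card Q :=
  free_effective_separability_general (Set.finite_range _) (FreeGroup.closure_range_of _) hΔ₀
end

section
/- Let Γ be a finitely generated group, Δ₀ a subgroup of Γ, n ≥ 1, and ρ₀ : Γ → GL(n,ℂ) a homomorphism. Suppose that for every finite subset S of Γ \ Δ₀ there exist homomorphisms ρ, ρ' : Γ → GL(n,ℂ) with ρ(δ) = ρ₀(δ) = ρ'(δ) for every δ ∈ Δ₀ and ρ(γ) ≠ ρ'(γ) for every γ ∈ S. Then there exists a homomorphism Φ : Γ → GL(n,ℂ) × GL(n,ℂ) such that for every γ ∈ Γ with γ ∉ Δ₀ there exists a polynomial P in the 2n² matrix-entry variables with complex coefficients vanishing at Φ(δ) for every δ ∈ Δ₀ but with P(Φ(γ)) ≠ 0. -/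
/-- Evaluate a polynomial in the `2n²` matrix-entry variables at a pair of matrices in
`GL(n, ℂ) × GL(n, ℂ)`. -/
noncomputable def evalAtGLPair {n : ℕ} (A : GL (Fin n) ℂ × GL (Fin n) ℂ)
    (P : MvPolynomial ((Fin n × Fin n) ⊕ (Fin n × Fin n)) ℂ) : ℂ :=
  MvPolynomial.eval
    (Sum.elim (fun p => (A.1 : Matrix (Fin n) (Fin n) ℂ) p.1 p.2)
              (fun p => (A.2 : Matrix (Fin n) (Fin n) ℂ) p.1 p.2)) P

/-!
It suffices to find two representations `σ, σ'` of `Γ` in `GL(n, ℂ)` that agree exactly on `Δ₀`: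
take `Φ = (σ, σ')` and separate `γ ∉ Δ₀` by a difference of matching matrix entries. Choosing for
each finite `S ⊆ Γ` a pair that agrees on `Δ₀` and differs on `S \ Δ₀`, the ultraproducts of the
two families along an ultrafilter containing all the sets `{S | γ ∈ S}` agree exactly on `Δ₀`.
They have coefficients in an ultrapower of `ℂ`, but their matrix entries generate a subfield of
cardinality at most that of `ℂ`, and every such field of characteristic zero embeds into `ℂ`.
-/

open Cardinal Filter Matrix

universe u v w

theorem mk_algebraicClosure_fractionRing_mvPolynomial (K : Type u) [Field K] (σ : Type v)
    [Infinite σ] (h : lift.{v} #K ≤ lift.{u} #σ) :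
    #(AlgebraicClosure (FractionRing (MvPolynomial σ K))) = lift.{u} #σ := by
  have mk_mvPolynomial : #(MvPolynomial σ K) = lift.{u} #σ := by
    rw [MvPolynomial.cardinalMk_eq_max_lift, max_eq_right h, max_eq_left (by simp)]
  refine le_antisymm ?_ ?_
  · calc #(AlgebraicClosure (FractionRing (MvPolynomial σ K)))
        ≤ max #(FractionRing (MvPolynomial σ K)) ℵ₀ := Algebra.IsAlgebraic.cardinalMk_le_max _ _
      _ = lift.{u} #σ := by
        rw [FractionRing.cardinalMk, mk_mvPolynomial, max_eq_left (by simp)]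
  · rw [← mk_mvPolynomial, ← FractionRing.cardinalMk]
    exact mk_le_of_injective (algebraMap _ (AlgebraicClosure _)).injective

theorem nonempty_ringHom_of_lift_mk_le (p : ℕ) (K : Type u) (L : Type v) [Field K] [Field L]
    [CharP K p] [CharP L p] [IsAlgClosed L] [Uncountable L] (h : lift.{v} #K ≤ lift.{u} #L) :
    Nonempty (K →+* L) := by
  -- Adjoining `#L` indeterminates to `K` raises its cardinality to that of `L`, so that the
  -- classification of uncountable algebraically closed fields applies.
  let E := AlgebraicClosure (FractionRing (MvPolynomial L K))
  have : CharP E p := charP_of_injective_algebraMap (algebraMap K E).injective p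
  have mk_E : #E = lift.{u} #L := mk_algebraicClosure_fractionRing_mvPolynomial K L h
  have equiv : Nonempty (E ≃ L) := lift_mk_eq'.1 (by simp [mk_E])
  have aleph0_lt : ℵ₀ < #E := by simp [mk_E]
  obtain ⟨e⟩ := IsAlgClosed.ringEquiv_of_equiv_of_char_eq p aleph0_lt equiv
  exact ⟨e.toRingHom.comp (algebraMap K E)⟩

theorem lift_mk_prod_le_of_countable {ι : Type u} {L : Type v} (κ : Type w) [Countable κ]
    [Infinite L] (h : lift.{v} #ι ≤ lift.{u} #L) : lift.{v} #(ι × κ) ≤ lift.{max u w} #L := by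
  have hι : lift.{max v w} #ι ≤ lift.{max u w} #L := by simpa using lift_le.{w}.2 h
  have hκ : lift.{max u v} #κ ≤ lift.{max u w} #L :=
    (lift_le_aleph0.2 mk_le_aleph0).trans (aleph0_le_lift.2 (aleph0_le_mk L))
  simpa using mul_le_of_le (by simp) hι hκ

theorem lift_mk_closure_range_le {ι : Type u} {K : Type w} {L : Type v} [Field K] [Infinite L]
    (f : ι → K) (h : lift.{v} #ι ≤ lift.{u} #L) :
    lift.{v} #(Subfield.closure (Set.range f)) ≤ lift.{w} #L := by
  obtain ⟨e⟩ := lift_mk_le'.1 h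
  have mk_range : lift.{v} #(Set.range f) ≤ lift.{w} #L :=
    lift_mk_le'.2 ⟨(Function.Embedding.ofSurjective _ Set.rangeFactorization_surjective).trans e⟩
  calc lift.{v} #(Subfield.closure (Set.range f))
      ≤ lift.{v} (max #(Set.range f) ℵ₀) := lift_le.2 (Subfield.cardinalMk_closure_le_max _)
    _ ≤ lift.{w} #L := by simpa using mk_range

section Representations

variable {Γ : Type u} [Group Γ] {m : Type*} [Fintype m] [DecidableEq m]

theorem eqLocus_comp_of_injective {M N : Type*} [Monoid M] [Monoid N] {φ : M →* N}
    (hφ : Function.Injective φ) (f g : Γ →* M) :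
    (φ.comp f).eqLocus (φ.comp g) = f.eqLocus g :=
  Subgroup.ext fun _ => hφ.eq_iff

theorem generalLinearGroup_map_injective {R S : Type*} [CommRing R] [CommRing S] {f : R →+* S}
    (hf : Function.Injective f) :
    Function.Injective (GeneralLinearGroup.map f : GL m R →* GL m S) :=
  Units.map_injective (Matrix.map_injective hf)

theorem exists_map_comp_eq_of_entries_mem_range {R S : Type*} [CommRing R] [CommRing S]
    {f : R →+* S} (hf : Function.Injective f) (σ : Γ →* GL m S)
    (hσ : ∀ γ i j, σ γ i j ∈ Set.range f) :
    ∃ τ : Γ →* GL m R, (GeneralLinearGroup.map f).comp τ = σ := by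
  choose entry map_entry using hσ
  have mapMatrix_entry (γ : Γ) : f.mapMatrix (of (entry γ)) = σ γ := Matrix.ext (map_entry γ)
  have inj : Function.Injective (f.mapMatrix : Matrix m m R →+* Matrix m m S) :=
    Matrix.map_injective hf
  let τ : Γ →* Matrix m m R :=
    { toFun γ := of (entry γ)
      map_one' := inj (by simp [-RingHom.mapMatrix_apply, mapMatrix_entry])
      map_mul' _ _ := inj (by simp [-RingHom.mapMatrix_apply, mapMatrix_entry]) }
  exact ⟨τ.toHomUnits, MonoidHom.ext fun γ => Units.ext (mapMatrix_entry γ)⟩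

theorem exists_eqLocus_eq_eqLocus_of_charP (p : ℕ) {K : Type w} (L : Type v) [Field K] [Field L]
    [CharP K p] [CharP L p] [IsAlgClosed L] [Uncountable L] (hΓ : lift.{v} #Γ ≤ lift.{u} #L)
    (σ σ' : Γ →* GL m K) :
    ∃ τ τ' : Γ →* GL m L, τ.eqLocus τ' = σ.eqLocus σ' := by
  let entries : Γ × (m × m ⊕ m × m) → K := fun x =>
    x.2.elim (fun ij => σ x.1 ij.1 ij.2) (fun ij => σ' x.1 ij.1 ij.2)
  let F := Subfield.closure (Set.range entries)
  have mk_F : lift.{v} #F ≤ lift.{w} #L :=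
    lift_mk_closure_range_le entries (lift_mk_prod_le_of_countable _ hΓ)
  have : CharP F p := (RingHom.charP_iff _ F.subtype_injective p).2 ‹_›
  obtain ⟨f⟩ := nonempty_ringHom_of_lift_mk_le p F L mk_F
  obtain ⟨τ, hτ⟩ := exists_map_comp_eq_of_entries_mem_range F.subtype_injective σ
    fun γ i j => ⟨⟨_, Subfield.subset_closure ⟨(γ, .inl (i, j)), rfl⟩⟩, rfl⟩
  obtain ⟨τ', hτ'⟩ := exists_map_comp_eq_of_entries_mem_range F.subtype_injective σ'
    fun γ i j => ⟨⟨_, Subfield.subset_closure ⟨(γ, .inr (i, j)), rfl⟩⟩, rfl⟩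
  refine ⟨(GeneralLinearGroup.map f).comp τ, (GeneralLinearGroup.map f).comp τ', ?_⟩
  rw [← hτ, ← hτ',
    eqLocus_comp_of_injective (generalLinearGroup_map_injective f.injective),
    eqLocus_comp_of_injective (generalLinearGroup_map_injective F.subtype_injective)]

/-- The reduced product along `l` of a family of representations `ρ`: the `(i, j)` entry at `γ` is
the germ along `l` of `k ↦ ρ k γ i j`. Along an ultrafilter it is the ultraproduct, in which two
families agree at `γ` exactly when almost all of their members do. -/
noncomputable def germRep {ι R : Type*} [CommRing R] (l : Filter ι) (ρ : ι → Γ →* GL m R) :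
    Γ →* GL m (Germ l R) :=
  (GeneralLinearGroup.map (Germ.coeRingHom l)).comp <|
    (Units.mapEquiv piRingEquiv.toMulEquiv.symm).toMonoidHom.comp <|
      MulEquiv.piUnits.symm.toMonoidHom.comp (MonoidHom.pi ρ)

theorem germRep_apply_eq_iff {ι R : Type*} [CommRing R] {l : Filter ι} {ρ ρ' : ι → Γ →* GL m R}
    {γ : Γ} : germRep l ρ γ = germRep l ρ' γ ↔ ∀ᶠ k in l, ρ k γ = ρ' k γ := by
  have entry_eq_iff (i j : m) :
      germRep l ρ γ i j = germRep l ρ' γ i j ↔ ∀ᶠ k in l, ρ k γ i j = ρ' k γ i j :=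
    Germ.coe_eq
  simp only [GeneralLinearGroup.ext_iff, entry_eq_iff, eventually_all]

theorem exists_ultrafilter_eqLocus_eq {k : Type*} [CommRing k] {Δ : Subgroup Γ}
    (h : ∀ S : Finset Γ, (∀ γ ∈ S, γ ∉ Δ) →
      ∃ ρ ρ' : Γ →* GL m k, Δ ≤ ρ.eqLocus ρ' ∧ ∀ γ ∈ S, ρ γ ≠ ρ' γ) :
    ∃ (U : Ultrafilter (Finset Γ)) (σ σ' : Γ →* GL m (Germ (U : Filter (Finset Γ)) k)),
      σ.eqLocus σ' = Δ := by
  classical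
  choose ρ ρ' agree differ using fun S : Finset Γ =>
    h (S.filter (· ∉ Δ)) fun γ hγ => (Finset.mem_filter.1 hγ).2
  let U : Ultrafilter (Finset Γ) := Ultrafilter.of atTop
  refine ⟨U, germRep U ρ, germRep U ρ', le_antisymm (fun γ hγ => ?_) fun δ hδ => ?_⟩
  · by_contra hγΔ
    have eventually_mem : ∀ᶠ S in (U : Filter (Finset Γ)), γ ∈ S :=
      Ultrafilter.of_le _ (eventually_finset_mem_atTop γ)
    obtain ⟨S, hS, heq⟩ := (eventually_mem.and (germRep_apply_eq_iff.1 hγ)).exists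
    exact differ S γ (Finset.mem_filter.2 ⟨hS, hγΔ⟩) heq
  · exact germRep_apply_eq_iff.2 (.of_forall fun S => agree S hδ)

theorem exists_eqLocus_eq_of_forall_finset {L : Type v} [Field L] [IsAlgClosed L] [Uncountable L]
    (hΓ : lift.{v} #Γ ≤ lift.{u} #L) {Δ : Subgroup Γ}
    (h : ∀ S : Finset Γ, (∀ γ ∈ S, γ ∉ Δ) →
      ∃ ρ ρ' : Γ →* GL m L, Δ ≤ ρ.eqLocus ρ' ∧ ∀ γ ∈ S, ρ γ ≠ ρ' γ) :
    ∃ σ σ' : Γ →* GL m L, σ.eqLocus σ' = Δ := by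
  obtain ⟨U, σ, σ', rfl⟩ := exists_ultrafilter_eqLocus_eq h
  obtain ⟨p, _⟩ := CharP.exists L
  let toGerm : L →+* Germ (U : Filter (Finset Γ)) L :=
    (Germ.coeRingHom (U : Filter (Finset Γ))).comp (Pi.constRingHom _ L)
  have : CharP (Germ (U : Filter (Finset Γ)) L) p := charP_of_injective_ringHom toGerm.injective p
  exact exists_eqLocus_eq_eqLocus_of_charP p L hΓ σ σ'

end Representations

theorem exists_mvPolynomial_separating_eqLocus {Γ : Type*} [Group Γ] {n : ℕ}
    (σ σ' : Γ →* GL (Fin n) ℂ) {γ : Γ} (hγ : γ ∉ σ.eqLocus σ') :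
    ∃ P : MvPolynomial ((Fin n × Fin n) ⊕ (Fin n × Fin n)) ℂ,
      (∀ δ ∈ σ.eqLocus σ', evalAtGLPair (σ.prod σ' δ) P = 0) ∧
        evalAtGLPair (σ.prod σ' γ) P ≠ 0 := by
  obtain ⟨i, j, hij⟩ : ∃ i j, σ γ i j ≠ σ' γ i j := by
    by_contra! h
    exact hγ (GeneralLinearGroup.ext h)
  have eval_eq (δ : Γ) : evalAtGLPair (σ.prod σ' δ) (.X (.inl (i, j)) - .X (.inr (i, j))) =
      σ δ i j - σ' δ i j := by simp [evalAtGLPair]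
  refine ⟨.X (.inl (i, j)) - .X (.inr (i, j)), fun δ hδ => ?_, ?_⟩
  · rw [eval_eq, show σ δ = σ' δ from hδ, sub_self]
  · rw [eval_eq]
    exact sub_ne_zero.2 hij

theorem countable_of_group_fg {Γ : Type*} [Group Γ] (hΓ : Group.FG Γ) : Countable Γ := by
  obtain ⟨S, _, f, hf⟩ := Group.fg_iff_exists_freeGroup_hom_surjective_finite.1 hΓ
  exact hf.countable

theorem distinguished_to_zariski_closed_general {Γ : Type*} [Group Γ] (hΓ : #Γ ≤ 𝔠)
    (Δ₀ : Subgroup Γ) (n : ℕ)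
    (h : ∀ S : Finset Γ, (∀ γ ∈ S, γ ∉ Δ₀) →
      ∃ ρ ρ' : Γ →* GL (Fin n) ℂ, (∀ δ ∈ Δ₀, ρ δ = ρ' δ) ∧ ∀ γ ∈ S, ρ γ ≠ ρ' γ) :
    ∃ Φ : Γ →* GL (Fin n) ℂ × GL (Fin n) ℂ,
      ∀ γ : Γ, γ ∉ Δ₀ →
        ∃ P : MvPolynomial ((Fin n × Fin n) ⊕ (Fin n × Fin n)) ℂ,
          (∀ δ ∈ Δ₀, evalAtGLPair (Φ δ) P = 0) ∧ evalAtGLPair (Φ γ) P ≠ 0 := by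
  have : Uncountable ℂ := aleph0_lt_mk_iff.1 (mk_complex ▸ aleph0_lt_continuum)
  have mk_le : lift #Γ ≤ lift #ℂ := by simpa [mk_complex] using hΓ
  obtain ⟨σ, σ', rfl⟩ := exists_eqLocus_eq_of_forall_finset mk_le h
  exact ⟨σ.prod σ', fun γ hγ => exists_mvPolynomial_separating_eqLocus σ σ' hγ⟩

/-- Corollary 3.3: if `ρ₀` distinguishes `Δ₀` in `Γ`, then there is a representation
`Φ : Γ → GL(n,ℂ) × GL(n,ℂ)` for which `Φ(Δ₀)` is the intersection of `Φ(Γ)` with the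
Zariski closure of `Φ(Δ₀)`. -/
theorem distinguished_to_zariski_closed {Γ : Type*} [Group Γ]
    (hΓ : Group.FG Γ) (Δ₀ : Subgroup Γ) (n : ℕ) (hn : 1 ≤ n)
    (ρ₀ : Γ →* GL (Fin n) ℂ)
    (h : ∀ S : Finset Γ, (∀ γ ∈ S, γ ∉ Δ₀) →
      ∃ ρ ρ' : Γ →* GL (Fin n) ℂ,
        (∀ δ ∈ Δ₀, ρ δ = ρ₀ δ ∧ ρ' δ = ρ₀ δ) ∧ ∀ γ ∈ S, ρ γ ≠ ρ' γ) :
    ∃ Φ : Γ →* GL (Fin n) ℂ × GL (Fin n) ℂ,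
      ∀ γ : Γ, γ ∉ Δ₀ →
        ∃ P : MvPolynomial ((Fin n × Fin n) ⊕ (Fin n × Fin n)) ℂ,
          (∀ δ ∈ Δ₀, evalAtGLPair (Φ δ) P = 0) ∧ evalAtGLPair (Φ γ) P ≠ 0 := by
  have : Countable Γ := countable_of_group_fg hΓ
  refine distinguished_to_zariski_closed_general (mk_le_aleph0.trans aleph0_le_continuum) Δ₀ n
    fun S hS => ?_
  obtain ⟨ρ, ρ', agree, differ⟩ := h S hS
  exact ⟨ρ, ρ', fun δ hδ => (agree δ hδ).1.trans (agree δ hδ).2.symm, differ⟩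
end
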